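/- Let V and W be finite-dimensional complex inner product spaces with dim V = c and dim W = r, and let B₁, B₂ ∈ End(V), i ∈ Hom(W,V), j ∈ Hom(V,W) satisfy [B₁,B₂] + i∘j = 0. Fix (z₁,z₂) ∈ ℂ² and suppose α(z₁,z₂) is injective and β(z₁,z₂) is surjective. Then the range of α(z₁,z₂) is contained in the kernel of β(z₁,z₂), and the quotient space ker β(z₁,z₂) / range α(z₁,z₂) has complex dimension r (this quotient is the fiber at (z₁,z₂) of the rank-r vector bundle produced by the ADHM construction). -/

import Mathlib

open LinearMap

/-- The ADHM map `α(z₁,z₂) : V → V ⊕ V ⊕ W`, `v ↦ ((B₁+z₁·1)v, (B₂+z₂·1)v, j v)`. -/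
noncomputable def adhmAlpha {V W : Type*} [AddCommGroup V] [Module ℂ V]
    [AddCommGroup W] [Module ℂ W]
    (B₁ B₂ : V →ₗ[ℂ] V) (j : V →ₗ[ℂ] W) (z₁ z₂ : ℂ) :
    V →ₗ[ℂ] V × V × W :=
  (B₁ + z₁ • LinearMap.id).prod ((B₂ + z₂ • LinearMap.id).prod j)

/-- The ADHM map `β(z₁,z₂) : V ⊕ V ⊕ W → V`, `(v₁,v₂,w) ↦ −(B₂+z₂·1)v₁ + (B₁+z₁·1)v₂ + i w`. -/
noncomputable def adhmBeta {V W : Type*} [AddCommGroup V] [Module ℂ V]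
    [AddCommGroup W] [Module ℂ W]
    (B₁ B₂ : V →ₗ[ℂ] V) (i : W →ₗ[ℂ] V) (z₁ z₂ : ℂ) :
    V × V × W →ₗ[ℂ] V :=
  (-(B₂ + z₂ • LinearMap.id)) ∘ₗ LinearMap.fst ℂ V (V × W)
    + (B₁ + z₁ • LinearMap.id) ∘ₗ ((LinearMap.fst ℂ V W) ∘ₗ (LinearMap.snd ℂ V (V × W)))
    + i ∘ₗ ((LinearMap.snd ℂ V W) ∘ₗ (LinearMap.snd ℂ V (V × W)))

/-!
Expanding `β(z₁,z₂) ∘ α(z₁,z₂)`, every term involving `z₁` or `z₂` cancels and `[B₁,B₂] + i ∘ j`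
is left, so under the ADHM equation `V → V ⊕ V ⊕ W → V` is a complex. It is exact at both ends, so
the dimension `d` of its middle cohomology satisfies `d + 2 dim V = 2 dim V + dim W`, and the finite
number `2 dim V` cancels even when `dim W` is an infinite cardinal.
-/

universe u v w

theorem lift_rank_ker_quotient_range_add_add {R : Type*} [Ring R] {M : Type u} {N : Type v}
    {P : Type w} [AddCommGroup M] [AddCommGroup N] [AddCommGroup P] [Module R M] [Module R N]
    [Module R P] [HasRankNullity.{v} R] {f : M →ₗ[R] N} {g : N →ₗ[R] P}
    (hf : Function.Injective f) (hg : Function.Surjective g) (hfg : range f ≤ ker g) :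
    Cardinal.lift.{max u w} (Module.rank R (ker g ⧸ (range f).comap (ker g).subtype)) +
        Cardinal.lift.{max v w} (Module.rank R M) + Cardinal.lift.{max u v} (Module.rank R P) =
      Cardinal.lift.{max u w} (Module.rank R N) := by
  have rank_M : Cardinal.lift.{max v w} (Module.rank R M) =
      Cardinal.lift.{max u w} (Module.rank R ((range f).comap (ker g).subtype)) := by
    rw [(Submodule.comapSubtypeEquivOfLe hfg).rank_eq]
    simpa using congrArg Cardinal.lift.{w} (lift_rank_range_of_injective f hf).symm
  have rank_N : Cardinal.lift.{max u w} (Module.rank R N) =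
      Cardinal.lift.{max u v} (Module.rank R P) +
        Cardinal.lift.{max u w} (Module.rank R (ker g)) := by
    simpa using congrArg Cardinal.lift.{u} (lift_rank_eq_of_surjective hg)
  rw [rank_M, ← Cardinal.lift_add, Submodule.rank_quotient_add_rank, rank_N, add_comm]

section ADHM

variable {V : Type u} {W : Type v} [AddCommGroup V] [Module ℂ V] [AddCommGroup W] [Module ℂ W]

theorem adhmBeta_comp_adhmAlpha (B₁ B₂ : V →ₗ[ℂ] V) (i : W →ₗ[ℂ] V) (j : V →ₗ[ℂ] W) (z₁ z₂ : ℂ) :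
    adhmBeta B₁ B₂ i z₁ z₂ ∘ₗ adhmAlpha B₁ B₂ j z₁ z₂ = B₁ ∘ₗ B₂ - B₂ ∘ₗ B₁ + i ∘ₗ j := by
  ext v
  simp only [adhmAlpha, adhmBeta, LinearMap.add_apply, LinearMap.sub_apply,
    LinearMap.neg_apply, LinearMap.smul_apply, comp_apply, id_apply, prod_apply, Function.prod,
    fst_apply, snd_apply, map_add, map_smul]
  module

theorem adhm_fiber_dim_general [FiniteDimensional ℂ V] {B₁ B₂ : V →ₗ[ℂ] V} {i : W →ₗ[ℂ] V}
    {j : V →ₗ[ℂ] W} (hADHM : B₁ ∘ₗ B₂ - B₂ ∘ₗ B₁ + i ∘ₗ j = 0) {z₁ z₂ : ℂ}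
    (hinj : Function.Injective (adhmAlpha B₁ B₂ j z₁ z₂))
    (hsurj : Function.Surjective (adhmBeta B₁ B₂ i z₁ z₂)) :
    range (adhmAlpha B₁ B₂ j z₁ z₂) ≤ ker (adhmBeta B₁ B₂ i z₁ z₂) ∧
      Module.rank ℂ (ker (adhmBeta B₁ B₂ i z₁ z₂) ⧸
        (range (adhmAlpha B₁ B₂ j z₁ z₂)).comap (ker (adhmBeta B₁ B₂ i z₁ z₂)).subtype) =
      Cardinal.lift.{u} (Module.rank ℂ W) := by
  have range_le_ker : range (adhmAlpha B₁ B₂ j z₁ z₂) ≤ ker (adhmBeta B₁ B₂ i z₁ z₂) :=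
    range_le_ker_iff.2 ((adhmBeta_comp_adhmAlpha B₁ B₂ i j z₁ z₂).trans hADHM)
  refine ⟨range_le_ker, ?_⟩
  have rank_V_lt : Cardinal.lift.{v} (Module.rank ℂ V) < Cardinal.aleph0 :=
    Cardinal.lift_lt_aleph0.2 (Module.rank_lt_aleph0 ℂ V)
  have rank_sum : Module.rank ℂ (V × V × W) = Cardinal.lift.{u} (Module.rank ℂ W) +
      (Cardinal.lift.{v} (Module.rank ℂ V) + Cardinal.lift.{v} (Module.rank ℂ V)) := by
    rw [rank_prod, rank_prod, Cardinal.lift_umax.{u, v}, Cardinal.lift_id'.{u, max u v}]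
    ac_rfl
  have rank_fiber_add := lift_rank_ker_quotient_range_add_add hinj hsurj range_le_ker
  rw [Cardinal.lift_umax.{u, v}, Cardinal.lift_id'.{u, max u v}, Cardinal.lift_id'.{u, max u v},
    rank_sum, add_assoc] at rank_fiber_add
  exact Cardinal.eq_of_add_eq_add_right rank_fiber_add (Cardinal.add_lt_aleph0 rank_V_lt rank_V_lt)

end ADHM

/-- If `[B₁,B₂] + i∘j = 0` and, at a fixed `(z₁,z₂) ∈ ℂ²`, `α(z₁,z₂)` is injective and
`β(z₁,z₂)` is surjective, then `range α(z₁,z₂) ⊆ ker β(z₁,z₂)` and the quotient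
`ker β(z₁,z₂) / range α(z₁,z₂)` has complex dimension `r = dim W`: it is the fiber of the
rank-`r` bundle produced by the ADHM construction. -/
theorem adhm_fiber_dim
    {V W : Type*} [NormedAddCommGroup V] [InnerProductSpace ℂ V] [FiniteDimensional ℂ V]
    [NormedAddCommGroup W] [InnerProductSpace ℂ W] [FiniteDimensional ℂ W]
    (c r : ℕ) (hc : Module.finrank ℂ V = c) (hr : Module.finrank ℂ W = r)
    (B₁ B₂ : V →ₗ[ℂ] V) (i : W →ₗ[ℂ] V) (j : V →ₗ[ℂ] W)
    (hADHM1 : B₁ ∘ₗ B₂ - B₂ ∘ₗ B₁ + i ∘ₗ j = 0)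
    (z₁ z₂ : ℂ)
    (hinj : Function.Injective (adhmAlpha B₁ B₂ j z₁ z₂))
    (hsurj : Function.Surjective (adhmBeta B₁ B₂ i z₁ z₂)) :
    LinearMap.range (adhmAlpha B₁ B₂ j z₁ z₂) ≤ LinearMap.ker (adhmBeta B₁ B₂ i z₁ z₂)
    ∧ Module.finrank ℂ
        (↥(LinearMap.ker (adhmBeta B₁ B₂ i z₁ z₂)) ⧸
          Submodule.comap (LinearMap.ker (adhmBeta B₁ B₂ i z₁ z₂)).subtype
            (LinearMap.range (adhmAlpha B₁ B₂ j z₁ z₂))) = r := by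
  obtain ⟨range_le_ker, rank_fiber⟩ := adhm_fiber_dim_general hADHM1 hinj hsurj
  exact ⟨range_le_ker, by rw [← hr, Module.finrank, rank_fiber, Cardinal.toNat_lift]; rfl⟩
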